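/- arXiv:2107.02231 — 2 statements merged into one kernel-verified Lean document; each statement's English description precedes it below -/
import Mathlib

section
/- Let X be an ACM set of s distinct points in P^m × P^n. If q × q' ∈ X, then deg_X(q × q') ⪯ (deg_{X_1}(q), deg_{X_2}(q')) ⪯ (r_{X_1}, r_{X_2}). -/
/- Common setup: finite sets of points in the multiprojective space
   `P^m x P^n` over a field `K` of characteristic zero, their bihomogeneous
   vanishing ideals, bigraded Hilbert functions, Kähler differents,
   separators, Cayley-Bacharach property and complete intersections. -/

open MvPolynomial

set_option maxHeartbeats 1000000
set_option synthInstance.maxHeartbeats 400000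

noncomputable section

namespace MultiProjPoints

variable (K : Type) [Field K] [CharZero K] [DecidableEq K]

/-- The bigraded coordinate ring `S = K[X_0,…,X_m,Y_0,…,Y_n]` of `P^m × P^n`. -/
abbrev BiRing (m n : ℕ) : Type := MvPolynomial (Fin (m+1) ⊕ Fin (n+1)) K

/-- The weights giving the bigrading: `deg X_i = (1,0)`, `deg Y_j = (0,1)`. -/
def biwt (m n : ℕ) : (Fin (m+1) ⊕ Fin (n+1)) → ℤ × ℤ :=
  Sum.elim (fun _ => ((1 : ℤ), (0 : ℤ))) (fun _ => ((0 : ℤ), (1 : ℤ)))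

variable {m n : ℕ}

/-- A (representative of a) point of `P^m × P^n`. -/
abbrev BiPt (m n : ℕ) : Type := (Fin (m+1) → K) × (Fin (n+1) → K)

/-- `F` is bihomogeneous of degree `d`. -/
def IsBihom (F : BiRing K m n) (d : ℤ × ℤ) : Prop :=
  IsWeightedHomogeneous (biwt m n) F d

/-- Evaluation of a polynomial at (a representative of) a point. -/
def evalB (p : BiPt K m n) (F : BiRing K m n) : K :=
  eval (Sum.elim p.1 p.2) F

/-- A finset of representatives is a good configuration of points of
`P^m × P^n`: all representatives are nonzero, and proportional
representatives coincide (so distinct elements are distinct projective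
points, and images under the two projections behave correctly). -/
def GoodConfig (𝕏 : Finset (BiPt K m n)) : Prop :=
  (∀ p ∈ 𝕏, p.1 ≠ 0 ∧ p.2 ≠ 0) ∧
  (∀ p ∈ 𝕏, ∀ q ∈ 𝕏, (∃ c : K, c ≠ 0 ∧ p.1 = c • q.1) → p.1 = q.1) ∧
  (∀ p ∈ 𝕏, ∀ q ∈ 𝕏, (∃ c : K, c ≠ 0 ∧ p.2 = c • q.2) → p.2 = q.2)

/-- The bihomogeneous vanishing ideal `I_𝕏` of a set of points. -/
def vIdealB (𝕏 : Finset (BiPt K m n)) : Ideal (BiRing K m n) :=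
  Ideal.span {F | (∃ d, IsBihom K F d) ∧ ∀ p ∈ 𝕏, evalB K p F = 0}

/-- The bihomogeneous vanishing ideal of a single point. -/
def ptIdealB (p : BiPt K m n) : Ideal (BiRing K m n) :=
  Ideal.span {F | (∃ d, IsBihom K F d) ∧ evalB K p F = 0}

/-- The degree-`d` piece of `S/I`. -/
def degPieceB (I : Ideal (BiRing K m n)) (d : ℤ × ℤ) :
    Submodule K (BiRing K m n ⧸ I) :=
  (weightedHomogeneousSubmodule K (biwt m n) d).map
    (Ideal.Quotient.mkₐ K I).toLinearMap

/-- The Hilbert function of `S/I`. -/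
def HFI (I : Ideal (BiRing K m n)) (d : ℤ × ℤ) : ℕ :=
  Module.finrank K (degPieceB K I d)

/-- The Hilbert function of a set of points in `P^m × P^n`. -/
def HFB (𝕏 : Finset (BiPt K m n)) (d : ℤ × ℤ) : ℕ :=
  HFI K (vIdealB K 𝕏) d

/-- The Hilbert function of a (bihomogeneous) ideal `J` of `R_𝕏 = S/I`. -/
def HFIdealB (I : Ideal (BiRing K m n)) (J : Ideal (BiRing K m n ⧸ I))
    (d : ℤ × ℤ) : ℕ :=
  Module.finrank K ↥((Submodule.restrictScalars K J) ⊓ degPieceB K I d)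

/- ### Single projective space `P^N` -/

/-- The coordinate ring `K[X_0,…,X_N]` of `P^N`. -/
abbrev PRing (N : ℕ) : Type := MvPolynomial (Fin (N+1)) K

/-- The standard grading on `K[X_0,…,X_N]` (with values in `ℤ`). -/
def wt1 (N : ℕ) : Fin (N+1) → ℤ := fun _ => 1

/-- `F` is homogeneous of degree `d`. -/
def IsHom1 {N : ℕ} (F : PRing K N) (d : ℤ) : Prop :=
  IsWeightedHomogeneous (wt1 N) F d

/-- A good finite set of representatives of points in `P^N`. -/
def GoodSet {N : ℕ} (Y : Finset (Fin (N+1) → K)) : Prop :=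
  (∀ q ∈ Y, q ≠ 0) ∧
  (∀ p ∈ Y, ∀ q ∈ Y, (∃ c : K, c ≠ 0 ∧ p = c • q) → p = q)

/-- The homogeneous vanishing ideal of a set of points in `P^N`. -/
def vIdeal1 {N : ℕ} (Y : Finset (Fin (N+1) → K)) : Ideal (PRing K N) :=
  Ideal.span {F | (∃ d, IsHom1 K F d) ∧ ∀ q ∈ Y, eval q F = 0}

/-- The degree-`d` piece of `K[X_0,…,X_N]/I`. -/
def degPiece1 {N : ℕ} (I : Ideal (PRing K N)) (d : ℤ) :
    Submodule K (PRing K N ⧸ I) :=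
  (weightedHomogeneousSubmodule K (wt1 N) d).map
    (Ideal.Quotient.mkₐ K I).toLinearMap

/-- The Hilbert function of a set of points in `P^N`. -/
def HF1 {N : ℕ} (Y : Finset (Fin (N+1) → K)) (d : ℤ) : ℕ :=
  Module.finrank K (degPiece1 K (vIdeal1 K Y) d)

/-- The Hilbert function of a homogeneous ideal of `K[X_0,…,X_N]/I`. -/
def HFIdeal1 {N : ℕ} (I : Ideal (PRing K N)) (J : Ideal (PRing K N ⧸ I))
    (d : ℤ) : ℕ :=
  Module.finrank K ↥((Submodule.restrictScalars K J) ⊓ degPiece1 K I d)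

/-- The degree `deg_Y(q)` of a point `q` in `Y ⊆ P^N`: the minimal degree of
a homogeneous separator of `q` in `Y`. -/
def deg1 {N : ℕ} (Y : Finset (Fin (N+1) → K)) (q : Fin (N+1) → K) : ℕ :=
  sInf {d : ℕ | ∃ F : PRing K N, IsHom1 K F (d : ℤ) ∧ eval q F ≠ 0 ∧
    ∀ q' ∈ Y, q' ≠ q → eval q' F = 0}

/-- The regularity index of the Hilbert function of `Y ⊆ P^N`. -/
def regIndex1 {N : ℕ} (Y : Finset (Fin (N+1) → K)) : ℕ :=
  sInf {r : ℕ | ∀ i : ℕ, r ≤ i → HF1 K Y (i : ℤ) = Y.card}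

/-- `Y ⊆ P^N` is a Cayley-Bacharach scheme. -/
def IsCB1 {N : ℕ} (Y : Finset (Fin (N+1) → K)) : Prop :=
  ∀ q ∈ Y, deg1 K Y q = regIndex1 K Y

/- ### Kähler differents -/

/-- The variables `X_1,…,X_m,Y_1,…,Y_n` indexed by `Fin (m+n)`. -/
def bvar (m n : ℕ) (v : Fin (m+n)) : Fin (m+1) ⊕ Fin (n+1) :=
  if h : (v : ℕ) < m then Sum.inl ⟨(v : ℕ) + 1, by omega⟩
  else Sum.inr ⟨(v : ℕ) - m + 1, by have hv := v.isLt; omega⟩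

/-- The Kähler different of `R = S/I` w.r.t. a system of generators `F` of
`I`: the ideal generated by the `(m+n)×(m+n)`-minors of the Jacobian matrix
`(∂F_k/∂X_i, ∂F_k/∂Y_j)`. -/
def kdiffB (I : Ideal (BiRing K m n)) {r : ℕ} (F : Fin r → BiRing K m n) :
    Ideal (BiRing K m n ⧸ I) :=
  Ideal.span (Set.range fun ρ : Fin (m+n) → Fin r =>
    Ideal.Quotient.mk I (Matrix.det (Matrix.of fun u v : Fin (m+n) =>
      pderiv (bvar m n v) (F (ρ u)))))

/-- The Kähler different of `K[X_0,…,X_N]/I` w.r.t. a system of generators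
`F` of `I` (minors w.r.t. the variables `X_1,…,X_N`). -/
def kdiff1 {N : ℕ} (I : Ideal (PRing K N)) {r : ℕ} (F : Fin r → PRing K N) :
    Ideal (PRing K N ⧸ I) :=
  Ideal.span (Set.range fun ρ : Fin N → Fin r =>
    Ideal.Quotient.mk I (Matrix.det (Matrix.of fun u v : Fin N =>
      pderiv (Fin.succ v) (F (ρ u)))))

/-- The extension `ϑ_{𝕏₁} R_𝕏` to `R_𝕏 = S/I` of the Kähler different of
`𝕏₁ ⊆ P^m` computed from a system of generators `F` of `I_{𝕏₁}`. -/
def kdiffExtL (I : Ideal (BiRing K m n)) {r : ℕ} (F : Fin r → PRing K m) :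
    Ideal (BiRing K m n ⧸ I) :=
  Ideal.span (Set.range fun ρ : Fin m → Fin r =>
    Ideal.Quotient.mk I (rename Sum.inl (Matrix.det (Matrix.of fun u v : Fin m =>
      pderiv (Fin.succ v) (F (ρ u))))))

/-- The extension `ϑ_{𝕏₂} R_𝕏` to `R_𝕏 = S/I` of the Kähler different of
`𝕏₂ ⊆ P^n` computed from a system of generators `G` of `I_{𝕏₂}`. -/
def kdiffExtR (I : Ideal (BiRing K m n)) {r : ℕ} (G : Fin r → PRing K n) :
    Ideal (BiRing K m n ⧸ I) :=
  Ideal.span (Set.range fun ρ : Fin n → Fin r =>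
    Ideal.Quotient.mk I (rename Sum.inr (Matrix.det (Matrix.of fun u v : Fin n =>
      pderiv (Fin.succ v) (G (ρ u))))))

/- ### Regular sequences, ACM, complete intersections -/

/-- `a, b` form a regular sequence. -/
def RegPair {A : Type*} [CommRing A] (a b : A) : Prop :=
  (∀ z : A, a * z = 0 → z = 0) ∧
  (∀ z : A, b * z ∈ Ideal.span {a} → z ∈ Ideal.span {a})

/-- The image `x₀` of `X_0` in `S/I`. -/
def x0B (I : Ideal (BiRing K m n)) : BiRing K m n ⧸ I :=
  Ideal.Quotient.mk I (MvPolynomial.X (Sum.inl 0))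

/-- The image `y₀` of `Y_0` in `S/I`. -/
def y0B (I : Ideal (BiRing K m n)) : BiRing K m n ⧸ I :=
  Ideal.Quotient.mk I (MvPolynomial.X (Sum.inr 0))

/-- The standing assumption for ACM sets of points: (after a change of
coordinates) `x₀, y₀` form a regular sequence in `R_𝕏`. -/
def ACMxy (𝕏 : Finset (BiPt K m n)) : Prop :=
  RegPair (x0B K (vIdealB K 𝕏)) (y0B K (vIdealB K 𝕏))

/-- `𝕏` is arithmetically Cohen-Macaulay: some bihomogeneous linear forms
`ℓ` of degree `(1,0)` and `ℓ'` of degree `(0,1)` give a regular sequence in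
`R_𝕏` (for points this is equivalent to `depth R_𝕏 = 2`). -/
def IsACM (𝕏 : Finset (BiPt K m n)) : Prop :=
  ∃ l l' : BiRing K m n, IsBihom K l (1, 0) ∧ IsBihom K l' (0, 1) ∧
    RegPair (Ideal.Quotient.mk (vIdealB K 𝕏) l) (Ideal.Quotient.mk (vIdealB K 𝕏) l')

/-- A regular sequence in a commutative ring, given as a list:
each entry is a non-zerodivisor modulo the preceding ones, and the list
generates a proper ideal. -/
def IsRegSeq {A : Type*} [CommRing A] (l : List A) : Prop :=
  (∀ (i : ℕ) (h : i < l.length), ∀ z : A,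
      l.get ⟨i, h⟩ * z ∈ Ideal.span {x | x ∈ l.take i} →
      z ∈ Ideal.span {x | x ∈ l.take i}) ∧
  Ideal.span {x | x ∈ l} ≠ ⊤

/-- `𝕏` is a complete intersection of type `(d_1,…,d_m,d'_1,…,d'_n)`. -/
def IsCIB (𝕏 : Finset (BiPt K m n)) (d : Fin m → ℕ) (d' : Fin n → ℕ) : Prop :=
  ∃ (F : Fin m → BiRing K m n) (G : Fin n → BiRing K m n),
    (∀ i, IsBihom K (F i) ((d i : ℤ), 0)) ∧
    (∀ j, IsBihom K (G j) (0, (d' j : ℤ))) ∧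
    IsRegSeq (List.ofFn F ++ List.ofFn G) ∧
    Ideal.span (Set.range F ∪ Set.range G) = vIdealB K 𝕏

/-- `Y ⊆ P^N` is a complete intersection of type `(d_1,…,d_N)`. -/
def IsCI1 {N : ℕ} (Y : Finset (Fin (N+1) → K)) (d : Fin N → ℕ) : Prop :=
  ∃ F : Fin N → PRing K N,
    (∀ i, IsHom1 K (F i) (d i : ℤ)) ∧
    IsRegSeq (List.ofFn F) ∧
    Ideal.span (Set.range F) = vIdeal1 K Y

/- ### Separators and the Cayley-Bacharach property -/

/-- `F` is a separator of `p` in `𝕏`. -/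
def IsSepB (𝕏 : Finset (BiPt K m n)) (p : BiPt K m n) (F : BiRing K m n) : Prop :=
  evalB K p F ≠ 0 ∧ ∀ q ∈ 𝕏, q ≠ p → evalB K q F = 0

/-- The set of degrees of bihomogeneous separators of `p` in `𝕏`. -/
def sepDegsB (𝕏 : Finset (BiPt K m n)) (p : BiPt K m n) : Set (ℤ × ℤ) :=
  {d | ∃ F, IsBihom K F d ∧ IsSepB K 𝕏 p F}

/-- `deg_𝕏(p)`: the set of degrees of minimal separators of `p` in `𝕏`
(mimimality w.r.t. the componentwise order). -/
def minSepDegsB (𝕏 : Finset (BiPt K m n)) (p : BiPt K m n) : Set (ℤ × ℤ) :=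
  {d ∈ sepDegsB K 𝕏 p | ∀ d' ∈ sepDegsB K 𝕏 p, ¬ d' < d}

/-- `𝕏` has the Cayley-Bacharach property: the Hilbert function of
`𝕏 \ {p}` is independent of the choice of `p ∈ 𝕏`. -/
def HasCB (𝕏 : Finset (BiPt K m n)) : Prop :=
  ∀ p ∈ 𝕏, ∀ q ∈ 𝕏, ∀ d : ℤ × ℤ, HFB K (𝕏.erase p) d = HFB K (𝕏.erase q) d

/- ### Star property and fibres -/

/-- The `(⋆)`-property. -/
def StarProp (𝕏 : Finset (BiPt K m n)) : Prop :=
  ∀ p ∈ 𝕏, ∀ q ∈ 𝕏, ((p.1, q.2) ∈ 𝕏 ∨ (q.1, p.2) ∈ 𝕏)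

/-- `V_j = π₁(π₂⁻¹(q'_j) ∩ 𝕏)` for `q'_j = p.2`. -/
def Vset (𝕏 : Finset (BiPt K m n)) (p : BiPt K m n) : Finset (Fin (m+1) → K) :=
  (𝕏.filter fun q => q.2 = p.2).image Prod.fst

/-- `W_i = π₂(π₁⁻¹(q_i) ∩ 𝕏)` for `q_i = p.1`. -/
def Wset (𝕏 : Finset (BiPt K m n)) (p : BiPt K m n) : Finset (Fin (n+1) → K) :=
  (𝕏.filter fun q => q.1 = p.1).image Prod.snd

end MultiProjPoints

/-
Let `l, l'` be forms of degrees `(1, 0)` and `(0, 1)` giving a regular sequence in `R_𝕏`, and call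
`d` a separator degree of `p` if `p` has a bihomogeneous separator of degree `d`. If `F` and `G` are
separators of degrees `d + k • (0, 1)` and `d + i • (1, 0)`, then `l ^ i * F` and `l' ^ k * G` have
the same degree and both vanish on `𝕏 \ {p}`, so the second is a multiple of the first modulo `I_𝕏`.
Hence `l ^ i` divides `l' ^ k * G` in `R_𝕏`, therefore divides `G` by regularity, and the quotient
is a separator of degree `d`. Thus separator degrees are closed under componentwise minimum, and a
minimal one lies below all the others; the product of minimal separators of the two projections of
`p` shows that `(deg p.1, deg p.2)` is among them.

In `P^N`, the Hilbert function of `Y` in degree `d` is the rank of evaluation at `Y` on forms of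
degree `d`. It equals the number of points exactly when every point has a separator of degree `d`,
so separators exist already in the degree of the regularity index.
-/

namespace MultiProjPoints

section Algebra

lemma RegPair.pow {A : Type*} [CommRing A] {a b : A} (h : RegPair a b) (i k : ℕ) :
    RegPair (a ^ i) (b ^ k) := by
  obtain ⟨ha, hb⟩ := h
  have cancel {x y : A} (hxy : a * x = a * y) : x = y :=
    sub_eq_zero.mp (ha _ (by rw [mul_sub, hxy, sub_self]))
  simp only [Ideal.mem_span_singleton] at hb
  have dvd_of_dvd_mul (i : ℕ) : ∀ z, a ^ i ∣ b * z → a ^ i ∣ z := by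
    induction i with
    | zero => simp
    | succ i ih =>
      rintro z ⟨c, hc⟩
      obtain ⟨w, rfl⟩ := hb z (hc ▸ (dvd_pow_self a i.succ_ne_zero).mul_right c)
      rw [pow_succ'] at hc ⊢
      exact mul_dvd_mul_left a (ih w ⟨c, cancel (by linear_combination hc)⟩)
  refine ⟨fun z hz => ?_, fun z hz => ?_⟩
  · induction i with
    | zero => simpa using hz
    | succ i ih => exact ih (ha _ (by rwa [pow_succ', mul_assoc] at hz))
  · rw [Ideal.mem_span_singleton] at hz ⊢
    induction k with
    | zero => simpa using hz
    | succ k ih => exact ih (dvd_of_dvd_mul i _ (by rwa [pow_succ', mul_assoc] at hz))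

lemma exists_mem_sub_mul_mem_of_mk_dvd_mk {ι σ A : Type*} [DecidableEq ι] [AddLeftCancelMonoid ι]
    [CommRing A] [SetLike σ A] [AddSubgroupClass σ A] {𝒜 : ι → σ} [GradedRing 𝒜] {I : Ideal A}
    (hI : I.IsHomogeneous 𝒜) {i j : ι} {x g : A} (hx : x ∈ 𝒜 i) (hg : g ∈ 𝒜 (i + j))
    (hdvd : Ideal.Quotient.mk I x ∣ Ideal.Quotient.mk I g) :
    ∃ a ∈ 𝒜 j, g - x * a ∈ I := by
  obtain ⟨c, hc⟩ := hdvd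
  obtain ⟨a, rfl⟩ := Ideal.Quotient.mk_surjective c
  have hmem : g - x * a ∈ I := by rw [← Ideal.Quotient.eq, hc, map_mul]
  refine ⟨DirectSum.decompose 𝒜 a j, SetLike.coe_mem _, ?_⟩
  simpa only [DirectSum.decompose_sub, DirectSum.sub_apply, AddSubgroupClass.coe_sub,
    DirectSum.decompose_of_mem_same 𝒜 hg, DirectSum.coe_decompose_mul_add_of_left_mem 𝒜 hx]
    using hI (i + j) hmem

lemma finrank_map_eq_finrank_map {R V V₁ V₂ : Type*} [Ring R] [AddCommGroup V] [AddCommGroup V₁]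
    [AddCommGroup V₂] [Module R V] [Module R V₁] [Module R V₂] {f : V →ₗ[R] V₁} {g : V →ₗ[R] V₂}
    {W : Submodule R V} (h : ∀ w ∈ W, f w = 0 ↔ g w = 0) :
    Module.finrank R (W.map f) = Module.finrank R (W.map g) := by
  have hker : LinearMap.ker (f.domRestrict W) = LinearMap.ker (g.domRestrict W) := by
    ext w
    exact h w w.2
  rw [← LinearMap.range_domRestrict, ← LinearMap.range_domRestrict]
  exact ((f.domRestrict W).quotKerEquivRange.symm.trans
    ((Submodule.quotEquivOfEq _ _ hker).trans (g.domRestrict W).quotKerEquivRange)).finrank_eq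

lemma isWeightedHomogeneous_rename {R M N σ τ : Type*} [CommSemiring R] [AddCommMonoid M]
    [AddCommMonoid N] {w : σ → M} {w' : τ → N} {f : σ → τ} (φ : M →+ N)
    (hφ : ∀ i, w' (f i) = φ (w i)) {F : MvPolynomial σ R} {d : M}
    (hF : IsWeightedHomogeneous w F d) : IsWeightedHomogeneous w' (rename f F) (φ d) := by
  intro e he
  obtain ⟨u, rfl, hu⟩ := coeff_rename_ne_zero _ _ _ he
  rw [← hF hu, Finsupp.weight_apply, Finsupp.weight_apply, map_finsuppSum,
    Finsupp.sum_mapDomain_index (by simp) (by simp [add_nsmul])]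
  simp only [hφ, map_nsmul]

end Algebra

section ProjectiveSpace

variable {K : Type} [Field K] {N : ℕ}

/-- The single-projective-space analogue of `IsSepB`: `F` is a separator of `q` in `Y ⊆ P^N`. -/
def IsSep1 (Y : Finset (Fin (N + 1) → K)) (q : Fin (N + 1) → K) (F : PRing K N) : Prop :=
  eval q F ≠ 0 ∧ ∀ q' ∈ Y, q' ≠ q → eval q' F = 0

lemma exists_linearForm_eval_ne_zero {q q' : Fin (N + 1) → K} (h : q ∉ K ∙ q') :
    ∃ L : PRing K N, IsHom1 K L 1 ∧ eval q L ≠ 0 ∧ eval q' L = 0 := by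
  obtain ⟨f, hfq, hfq'⟩ := Submodule.exists_le_ker_of_notMem h
  have eval_form (v : Fin (N + 1) → K) :
      eval v (∑ i, C (f fun j => if i = j then 1 else 0) * X i) = f v := by
    rw [f.pi_apply_eq_sum_univ v]
    simp only [map_sum, map_mul, eval_C, eval_X, smul_eq_mul, mul_comm]
  refine ⟨∑ i, C (f fun j => if i = j then 1 else 0) * X i, ?_, ?_, ?_⟩
  · exact .sum _ _ _ fun i _ => (isWeightedHomogeneous_X K (wt1 N) i).C_mul _
  · rwa [eval_form]
  · rw [eval_form]
    exact hfq' (Submodule.mem_span_singleton_self q')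

lemma GoodSet.notMem_span_singleton {Y : Finset (Fin (N + 1) → K)} (hY : GoodSet K Y)
    {q q' : Fin (N + 1) → K} (hq : q ∈ Y) (hq' : q' ∈ Y) (hne : q ≠ q') : q ∉ K ∙ q' := by
  rw [Submodule.mem_span_singleton]
  rintro ⟨c, rfl⟩
  exact hne (hY.2 _ hq _ hq' ⟨c, left_ne_zero_of_smul (hY.1 _ hq), rfl⟩)

lemma GoodSet.exists_isSep1_of_card_le {Y : Finset (Fin (N + 1) → K)} (hY : GoodSet K Y)
    {q : Fin (N + 1) → K} (hq : q ∈ Y) {d : ℕ} (hd : Y.card ≤ d) :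
    ∃ F, IsHom1 K F (d : ℤ) ∧ IsSep1 Y q F := by
  classical
  have exists_form : ∀ q' ∈ Y.erase q,
      ∃ L : PRing K N, IsHom1 K L 1 ∧ eval q L ≠ 0 ∧ eval q' L = 0 := fun q' hq' =>
    exists_linearForm_eval_ne_zero <| hY.notMem_span_singleton hq (Finset.mem_of_mem_erase hq')
      (Finset.ne_of_mem_erase hq').symm
  choose! L hL hLq hLq' using exists_form
  obtain ⟨k, hk⟩ := Function.ne_iff.mp (hY.1 q hq)
  have hcard : (Y.erase q).card ≤ d := Finset.card_erase_le.trans hd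
  refine ⟨X k ^ (d - (Y.erase q).card) * ∏ q' ∈ Y.erase q, L q', ?_, ?_, fun q' hq' hne => ?_⟩
  · have hdeg : (d - (Y.erase q).card) • wt1 N k + ∑ _ ∈ Y.erase q, (1 : ℤ) = d := by
      simp [wt1, hcard]
    exact hdeg ▸ ((isWeightedHomogeneous_X K (wt1 N) k).pow _).mul (.prod _ L (fun _ => 1) hL)
  · rw [map_mul, map_pow, eval_X, map_prod]
    exact mul_ne_zero (pow_ne_zero _ hk) (Finset.prod_ne_zero_iff.mpr hLq)
  · have hmem : q' ∈ Y.erase q := Finset.mem_erase.mpr ⟨hne, hq'⟩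
    rw [map_mul, map_prod, Finset.prod_eq_zero hmem (hLq' q' hmem), mul_zero]

lemma IsHom1.mem_vIdeal1_iff {Y : Finset (Fin (N + 1) → K)} {F : PRing K N} {d : ℤ}
    (hF : IsHom1 K F d) : F ∈ vIdeal1 K Y ↔ ∀ q ∈ Y, eval q F = 0 := by
  refine ⟨fun h q hq => ?_, fun h => Ideal.subset_span ⟨⟨d, hF⟩, h⟩⟩
  have hle : vIdeal1 K Y ≤ RingHom.ker (eval q) := Ideal.span_le.mpr fun G hG => hG.2 q hq
  exact hle h

/-- Simultaneous evaluation at the chosen representatives of the points of `Y`. On forms of a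
fixed degree its kernel is the corresponding piece of `I_Y`. -/
def evalPoints (Y : Finset (Fin (N + 1) → K)) : PRing K N →ₗ[K] Y → K :=
  LinearMap.pi fun q => (aeval (R := K) (q : Fin (N + 1) → K)).toLinearMap

lemma evalPoints_apply (Y : Finset (Fin (N + 1) → K)) (F : PRing K N) (q : Y) :
    evalPoints Y F q = eval (q : Fin (N + 1) → K) F := by
  simp [evalPoints, aeval_eq_eval]

lemma HF1_eq_finrank_map_evalPoints (Y : Finset (Fin (N + 1) → K)) (d : ℤ) :
    HF1 K Y d =
      Module.finrank K ((weightedHomogeneousSubmodule K (wt1 N) d).map (evalPoints Y)) := by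
  refine finrank_map_eq_finrank_map fun F hF => ?_
  have hmem : F ∈ vIdeal1 K Y ↔ _ := IsHom1.mem_vIdeal1_iff (d := d) hF
  simp [Ideal.Quotient.eq_zero_iff_mem, hmem, funext_iff, evalPoints_apply]

lemma HF1_eq_card_iff {Y : Finset (Fin (N + 1) → K)} {d : ℤ} :
    HF1 K Y d = Y.card ↔ ∀ q ∈ Y, ∃ F, IsHom1 K F d ∧ IsSep1 Y q F := by
  classical
  have hcard : Module.finrank K (Y → K) = Y.card := by simp
  rw [HF1_eq_finrank_map_evalPoints, ← hcard]
  constructor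
  · intro h q hq
    have hmem : Pi.single ⟨q, hq⟩ 1 ∈
        (weightedHomogeneousSubmodule K (wt1 N) d).map (evalPoints Y) :=
      Submodule.eq_top_of_finrank_eq h ▸ Submodule.mem_top
    obtain ⟨F, hF, hFq⟩ := hmem
    have eval_F (r : Y) : eval (r : Fin (N + 1) → K) F = (Pi.single ⟨q, hq⟩ 1 : Y → K) r := by
      rw [← hFq, evalPoints_apply]
    refine ⟨F, hF, ?_, fun q' hq' hne => ?_⟩
    · simp [eval_F ⟨q, hq⟩]
    · simp [eval_F ⟨q', hq'⟩, hne]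
  · intro h
    suffices hrange : (weightedHomogeneousSubmodule K (wt1 N) d).map (evalPoints Y) = ⊤ by
      rw [hrange, finrank_top]
    rw [eq_top_iff, ← (Pi.basisFun K Y).span_eq, Submodule.span_le]
    rintro _ ⟨q, rfl⟩
    obtain ⟨F, hF, hFq, hF0⟩ := h q q.2
    refine ⟨(eval (q : Fin (N + 1) → K) F)⁻¹ • F, Submodule.smul_mem _ _ hF, funext fun r => ?_⟩
    rcases eq_or_ne r q with rfl | hne
    · simp [evalPoints_apply, hFq]
    · simp [evalPoints_apply, hne, hF0 r r.2 (Subtype.coe_ne_coe.mpr hne)]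

lemma GoodSet.exists_isSep1_deg1 {Y : Finset (Fin (N + 1) → K)} (hY : GoodSet K Y)
    {q : Fin (N + 1) → K} (hq : q ∈ Y) : ∃ F, IsHom1 K F (deg1 K Y q : ℤ) ∧ IsSep1 Y q F :=
  Nat.sInf_mem (s := {d : ℕ | ∃ F, IsHom1 K F (d : ℤ) ∧ IsSep1 Y q F})
    ⟨Y.card, hY.exists_isSep1_of_card_le hq le_rfl⟩

lemma GoodSet.deg1_le_regIndex1 {Y : Finset (Fin (N + 1) → K)} (hY : GoodSet K Y)
    {q : Fin (N + 1) → K} (hq : q ∈ Y) : deg1 K Y q ≤ regIndex1 K Y := by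
  have hreg : ∀ i : ℕ, regIndex1 K Y ≤ i → HF1 K Y (i : ℤ) = Y.card :=
    Nat.sInf_mem (s := {r : ℕ | ∀ i : ℕ, r ≤ i → HF1 K Y (i : ℤ) = Y.card})
      ⟨Y.card, fun _ hi => HF1_eq_card_iff.mpr fun _ hr => hY.exists_isSep1_of_card_le hr hi⟩
  exact Nat.sInf_le (HF1_eq_card_iff.mp (hreg _ le_rfl) q hq)

end ProjectiveSpace

section ProductOfProjectiveSpaces

variable {K : Type} [Field K] {m n : ℕ} {𝕏 : Finset (BiPt K m n)} {p : BiPt K m n}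

lemma IsHom1.isBihom_rename_inl {F : PRing K m} {d : ℤ} (hF : IsHom1 K F d) :
    IsBihom K (rename Sum.inl F : BiRing K m n) (d, 0) :=
  isWeightedHomogeneous_rename (w' := biwt m n) (AddMonoidHom.inl ℤ ℤ) (fun _ => rfl) hF

lemma IsHom1.isBihom_rename_inr {F : PRing K n} {d : ℤ} (hF : IsHom1 K F d) :
    IsBihom K (rename Sum.inr F : BiRing K m n) (0, d) :=
  isWeightedHomogeneous_rename (w' := biwt m n) (AddMonoidHom.inr ℤ ℤ) (fun _ => rfl) hF

lemma evalB_eq_zero_of_mem_vIdealB {F : BiRing K m n} (hF : F ∈ vIdealB K 𝕏) (hp : p ∈ 𝕏) :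
    evalB K p F = 0 := by
  have hle : vIdealB K 𝕏 ≤ RingHom.ker (eval (Sum.elim p.1 p.2)) :=
    Ideal.span_le.mpr fun G hG => hG.2 p hp
  exact hle hF

lemma IsBihom.mem_vIdealB {F : BiRing K m n} {d : ℤ × ℤ} (hF : IsBihom K F d)
    (h : ∀ q ∈ 𝕏, evalB K q F = 0) : F ∈ vIdealB K 𝕏 :=
  Ideal.subset_span ⟨⟨d, hF⟩, h⟩

lemma IsBihom.exists_sub_mul_mem_vIdealB {L G : BiRing K m n} {u d : ℤ × ℤ} (hL : IsBihom K L u)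
    (hG : IsBihom K G (u + d))
    (hdvd : Ideal.Quotient.mk (vIdealB K 𝕏) L ∣ Ideal.Quotient.mk (vIdealB K 𝕏) G) :
    ∃ A, IsBihom K A d ∧ G - L * A ∈ vIdealB K 𝕏 := by
  let := weightedGradedAlgebra K (biwt m n)
  have hI : (vIdealB K 𝕏).IsHomogeneous (weightedHomogeneousSubmodule K (biwt m n)) :=
    Ideal.homogeneous_span _ _ fun _ hF => hF.1
  exact exists_mem_sub_mul_mem_of_mk_dvd_mk hI hL hG hdvd

lemma GoodConfig.goodSet_image_fst [DecidableEq K] (h : GoodConfig K 𝕏) :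
    GoodSet K (𝕏.image Prod.fst) := by
  simp only [GoodSet, Finset.forall_mem_image]
  exact ⟨fun p hp => (h.1 p hp).1, h.2.1⟩

lemma GoodConfig.goodSet_image_snd [DecidableEq K] (h : GoodConfig K 𝕏) :
    GoodSet K (𝕏.image Prod.snd) := by
  simp only [GoodSet, Finset.forall_mem_image]
  exact ⟨fun p hp => (h.1 p hp).2, h.2.2⟩

lemma IsSep1.isSepB_mul [DecidableEq K] {F : PRing K m} {G : PRing K n}
    (hF : IsSep1 (𝕏.image Prod.fst) p.1 F) (hG : IsSep1 (𝕏.image Prod.snd) p.2 G) :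
    IsSepB K 𝕏 p (rename Sum.inl F * rename Sum.inr G) := by
  have evalB_mul (q : BiPt K m n) : evalB K q (rename Sum.inl F * rename Sum.inr G) =
      eval q.1 F * eval q.2 G := by
    simp only [evalB, map_mul, eval_rename, Sum.elim_comp_inl, Sum.elim_comp_inr]
  refine ⟨by rw [evalB_mul]; exact mul_ne_zero hF.1 hG.1, fun q hq hne => ?_⟩
  rw [evalB_mul, mul_eq_zero]
  by_cases hfst : q.1 = p.1
  · exact .inr <| hG.2 q.2 (Finset.mem_image_of_mem _ hq) fun hsnd => hne (Prod.ext hfst hsnd)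
  · exact .inl <| hF.2 q.1 (Finset.mem_image_of_mem _ hq) hfst

lemma GoodConfig.deg1_mem_sepDegsB [DecidableEq K] (h : GoodConfig K 𝕏) (hp : p ∈ 𝕏) :
    ((deg1 K (𝕏.image Prod.fst) p.1 : ℤ), (deg1 K (𝕏.image Prod.snd) p.2 : ℤ)) ∈
      sepDegsB K 𝕏 p := by
  obtain ⟨F, hF, hFsep⟩ := h.goodSet_image_fst.exists_isSep1_deg1 (Finset.mem_image_of_mem _ hp)
  obtain ⟨G, hG, hGsep⟩ := h.goodSet_image_snd.exists_isSep1_deg1 (Finset.mem_image_of_mem _ hp)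
  refine ⟨rename Sum.inl F * rename Sum.inr G, ?_, hFsep.isSepB_mul hGsep⟩
  simpa [IsBihom] using hF.isBihom_rename_inl.mul hG.isBihom_rename_inr

lemma GoodConfig.sepDegsB_nonempty (h : GoodConfig K 𝕏) (hp : p ∈ 𝕏) :
    (sepDegsB K 𝕏 p).Nonempty := by
  classical exact ⟨_, h.deg1_mem_sepDegsB hp⟩

lemma evalB_ne_zero_of_mul_eq_zero_imp {L : BiRing K m n} {u : ℤ × ℤ} (hL : IsBihom K L u)
    (hreg : ∀ z, Ideal.Quotient.mk (vIdealB K 𝕏) L * z = 0 → z = 0) (hp : p ∈ 𝕏)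
    (hsep : (sepDegsB K 𝕏 p).Nonempty) : evalB K p L ≠ 0 := by
  intro hLp
  obtain ⟨d, F, hF, hFp, hF0⟩ := hsep
  have hmem : L * F ∈ vIdealB K 𝕏 := by
    refine IsBihom.mem_vIdealB (hL.mul hF) fun q hq => ?_
    rw [evalB, map_mul, mul_eq_zero]
    rcases eq_or_ne q p with rfl | hne
    · exact .inl hLp
    · exact .inr (hF0 q hq hne)
  have hFmem : F ∈ vIdealB K 𝕏 := by
    rw [← Ideal.Quotient.eq_zero_iff_mem] at hmem ⊢
    exact hreg _ (by rwa [← map_mul])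
  exact hFp (evalB_eq_zero_of_mem_vIdealB hFmem hp)

lemma IsSepB.mk_dvd_mk {H G : BiRing K m n} {d : ℤ × ℤ} (hH : IsSepB K 𝕏 p H)
    (hHd : IsBihom K H d) (hGd : IsBihom K G d) (hG : ∀ q ∈ 𝕏, q ≠ p → evalB K q G = 0) :
    Ideal.Quotient.mk (vIdealB K 𝕏) H ∣ Ideal.Quotient.mk (vIdealB K 𝕏) G := by
  let c : K := evalB K p G / evalB K p H
  refine ⟨Ideal.Quotient.mk _ (C c), ?_⟩
  rw [mul_comm, ← map_mul, Ideal.Quotient.eq]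
  refine IsBihom.mem_vIdealB (hGd.sub (hHd.C_mul c)) fun q hq => ?_
  have evalB_sub : evalB K q (G - C c * H) = evalB K q G - c * evalB K q H := by simp [evalB]
  rw [evalB_sub]
  rcases eq_or_ne q p with rfl | hne
  · rw [div_mul_cancel₀ _ hH.1, sub_self]
  · rw [hG q hq hne, hH.2 q hq hne, mul_zero, sub_zero]

lemma IsSepB.mul_left {L F : BiRing K m n} (hF : IsSepB K 𝕏 p F) (hL : evalB K p L ≠ 0) :
    IsSepB K 𝕏 p (L * F) := by
  simp only [IsSepB, evalB, map_mul] at hF hL ⊢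
  exact ⟨mul_ne_zero hL hF.1, fun q hq hne => mul_eq_zero_of_right _ (hF.2 q hq hne)⟩

lemma IsSepB.of_sub_mul_mem {L G A : BiRing K m n} (hG : IsSepB K 𝕏 p G) (hp : p ∈ 𝕏)
    (hL : ∀ q ∈ 𝕏, evalB K q L ≠ 0) (hA : G - L * A ∈ vIdealB K 𝕏) : IsSepB K 𝕏 p A := by
  have evalB_G : ∀ q ∈ 𝕏, evalB K q G = evalB K q L * evalB K q A := fun q hq => by
    simpa [evalB, sub_eq_zero] using evalB_eq_zero_of_mem_vIdealB hA hq
  refine ⟨right_ne_zero_of_mul (evalB_G p hp ▸ hG.1), fun q hq hne => ?_⟩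
  exact (mul_eq_zero.mp ((evalB_G q hq).symm.trans (hG.2 q hq hne))).resolve_left (hL q hq)

lemma mem_sepDegsB_of_regPair (h : GoodConfig K 𝕏) (hp : p ∈ 𝕏) {L L' : BiRing K m n}
    {u v d : ℤ × ℤ} (hL : IsBihom K L u) (hL' : IsBihom K L' v)
    (hreg : RegPair (Ideal.Quotient.mk (vIdealB K 𝕏) L) (Ideal.Quotient.mk (vIdealB K 𝕏) L'))
    (hv : v + d ∈ sepDegsB K 𝕏 p) (hu : u + d ∈ sepDegsB K 𝕏 p) : d ∈ sepDegsB K 𝕏 p := by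
  obtain ⟨F, hF, hFsep⟩ := hv
  obtain ⟨G, hG, hGsep⟩ := hu
  have evalB_L_ne_zero : ∀ q ∈ 𝕏, evalB K q L ≠ 0 := fun q hq =>
    evalB_ne_zero_of_mul_eq_zero_imp hL hreg.1 hq (h.sepDegsB_nonempty hq)
  have hL'G : IsBihom K (L' * G) (u + (v + d)) := add_left_comm u v d ▸ hL'.mul hG
  have hdvd : Ideal.Quotient.mk (vIdealB K 𝕏) (L * F) ∣ Ideal.Quotient.mk _ (L' * G) :=
    (hFsep.mul_left (evalB_L_ne_zero p hp)).mk_dvd_mk (hL.mul hF) hL'G fun q hq hne => by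
      rw [evalB, map_mul]
      exact mul_eq_zero_of_right _ (hGsep.2 q hq hne)
  have hLG : Ideal.Quotient.mk (vIdealB K 𝕏) L ∣ Ideal.Quotient.mk _ G := by
    simp only [map_mul] at hdvd
    have hmem := hreg.2 _ (Ideal.mem_span_singleton.mpr (dvd_of_mul_right_dvd hdvd))
    exact Ideal.mem_span_singleton.mp hmem
  obtain ⟨A, hA, hGA⟩ := hL.exists_sub_mul_mem_vIdealB hG hLG
  exact ⟨A, hA, hGsep.of_sub_mul_mem hp evalB_L_ne_zero hGA⟩

lemma IsACM.infClosed_sepDegsB (hACM : IsACM K 𝕏) (h : GoodConfig K 𝕏) (hp : p ∈ 𝕏) :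
    InfClosed (sepDegsB K 𝕏 p) := by
  obtain ⟨l, l', hl, hl', hreg⟩ := hACM
  suffices of_fst_le : ∀ ⦃d e⦄, d ∈ sepDegsB K 𝕏 p → e ∈ sepDegsB K 𝕏 p → d.1 ≤ e.1 →
      d ⊓ e ∈ sepDegsB K 𝕏 p by
    intro d hd e he
    rcases le_total d.1 e.1 with hle | hle
    · exact of_fst_le hd he hle
    · exact inf_comm e d ▸ of_fst_le he hd hle
  rintro ⟨a, b⟩ ⟨c, e⟩ hd he (hac : a ≤ c)
  rcases le_total b e with hbe | heb
  · rwa [inf_eq_left.mpr (Prod.mk_le_mk.mpr ⟨hac, hbe⟩)]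
  rw [Prod.mk_inf_mk, inf_eq_left.mpr hac, inf_eq_right.mpr heb]
  obtain ⟨i, rfl⟩ := Int.le.dest hac
  obtain ⟨k, rfl⟩ := Int.le.dest heb
  refine mem_sepDegsB_of_regPair h hp (hl.pow i) (hl'.pow k) ?_ ?_ ?_
  · simpa only [map_pow] using hreg.pow i k
  · simpa [add_comm] using hd
  · simpa [add_comm] using he

lemma le_of_mem_minSepDegsB {d e : ℤ × ℤ} (hinf : InfClosed (sepDegsB K 𝕏 p))
    (hd : d ∈ minSepDegsB K 𝕏 p) (he : e ∈ sepDegsB K 𝕏 p) : d ≤ e :=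
  inf_eq_left.mp (eq_of_le_of_not_lt inf_le_left (hd.2 _ (hinf hd.1 he)))

lemma ACMxy.isACM (h : ACMxy K 𝕏) : IsACM K 𝕏 :=
  ⟨X (Sum.inl 0), X (Sum.inr 0), isWeightedHomogeneous_X K _ _, isWeightedHomogeneous_X K _ _, h⟩

end ProductOfProjectiveSpaces

end MultiProjPoints

open MultiProjPoints in
theorem statement_13_general {K : Type} [Field K] [DecidableEq K] {m n : ℕ}
    {𝕏 : Finset (BiPt K m n)} (hgood : GoodConfig K 𝕏) (hACM : IsACM K 𝕏)
    {p : BiPt K m n} (hp : p ∈ 𝕏) :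
    (∀ dd ∈ minSepDegsB K 𝕏 p,
      dd ≤ ((deg1 K (𝕏.image Prod.fst) p.1 : ℤ),
            (deg1 K (𝕏.image Prod.snd) p.2 : ℤ))) ∧
    deg1 K (𝕏.image Prod.fst) p.1 ≤ regIndex1 K (𝕏.image Prod.fst) ∧
    deg1 K (𝕏.image Prod.snd) p.2 ≤ regIndex1 K (𝕏.image Prod.snd) :=
  ⟨fun _ hdd => le_of_mem_minSepDegsB (hACM.infClosed_sepDegsB hgood hp) hdd
      (hgood.deg1_mem_sepDegsB hp),
    hgood.goodSet_image_fst.deg1_le_regIndex1 (Finset.mem_image_of_mem _ hp),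
    hgood.goodSet_image_snd.deg1_le_regIndex1 (Finset.mem_image_of_mem _ hp)⟩

open MultiProjPoints in
/-- Lemma 4.11: for an ACM set `𝕏` of points in
`P^m × P^n` and `q × q' ∈ 𝕏` one has
`deg_𝕏(q × q') ⪯ (deg_{𝕏₁}(q), deg_{𝕏₂}(q')) ⪯ (r_{𝕏₁}, r_{𝕏₂})`. -/
theorem statement_13 (K : Type) [Field K] [CharZero K] [DecidableEq K]
    (m n : ℕ) (𝕏 : Finset (BiPt K m n)) (hgood : GoodConfig K 𝕏)
    (hne : 𝕏.Nonempty) (hACM : ACMxy K 𝕏)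
    (p : BiPt K m n) (hp : p ∈ 𝕏) :
    (∀ dd ∈ minSepDegsB K 𝕏 p,
      dd ≤ ((deg1 K (𝕏.image Prod.fst) p.1 : ℤ),
            (deg1 K (𝕏.image Prod.snd) p.2 : ℤ))) ∧
    deg1 K (𝕏.image Prod.fst) p.1 ≤ regIndex1 K (𝕏.image Prod.fst) ∧
    deg1 K (𝕏.image Prod.snd) p.2 ≤ regIndex1 K (𝕏.image Prod.snd) := by
  exact statement_13_general hgood hACM.isACM hp
end
end

section
/- Let X ⊆ P^m × P^n be a finite set of distinct points having the (*)-property. Then X has the Cayley-Bacharach property if and only if: (a) V_1,...,V_{s_2} are Cayley-Bacharach schemes in P^m with r_{V_1} = ... = r_{V_{s_2}}, and (b) W_1,...,W_{s_1} are Cayley-Bacharach schemes in P^n with r_{W_1} = ... = r_{W_{s_1}}. -/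
/- Common setup: finite sets of points in the multiprojective space
   `P^m x P^n` over a field `K` of characteristic zero, their bihomogeneous
   vanishing ideals, bigraded Hilbert functions, Kähler differents,
   separators, Cayley-Bacharach property and complete intersections. -/

open MvPolynomial

set_option maxHeartbeats 1000000
set_option synthInstance.maxHeartbeats 400000

noncomputable section

/-
Evaluation at a point is a linear functional on the forms of a fixed degree, and the Hilbert
function of a set of points is the rank of its evaluation functionals. A point `p` has a separator
of degree `d` exactly when its functional lies outside the span of the others, that is, when
removing `p` lowers the Hilbert function at `d` by one. Hence the Cayley-Bacharach property says
that all points have the same set of separator degrees, and in one projective space the regularity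
index is the largest of the degrees of the points.

Let `V`, `W` be the horizontal and vertical slices of `𝕏` through `p`. Specialising one group of
variables at `p` turns a separator of `p` in `𝕏` into separators of `p.1` in `V` and of `p.2` in
`W`. Conversely, the product of two such separators vanishes at every other point of `𝕏`, because
`(⋆)` makes one of its projections land in the corresponding slice. So the separator degrees of `p`
are exactly the bidegrees above `(deg_V(p.1), deg_W(p.2))`, and the property splits into one
condition on each factor: constancy of `deg_V(p.1)` and constancy of `deg_W(p.2)`.
-/

namespace MultiProjPoints

section LinearAlgebra

theorem finrank_span_insert_of_notMem {K V : Type*} [DivisionRing K] [AddCommGroup V] [Module K V]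
    {s : Set V} (hs : s.Finite) {v : V} (hv : v ∉ Submodule.span K s) :
    Module.finrank K (Submodule.span K (insert v s)) =
      Module.finrank K (Submodule.span K s) + 1 := by
  have := FiniteDimensional.span_of_finite K hs
  have hv₀ : v ≠ 0 := fun h => hv (h ▸ Submodule.zero_mem _)
  have hdisj : Submodule.span K s ⊓ K ∙ v = ⊥ :=
    ((Submodule.disjoint_span_singleton' hv₀).2 hv).eq_bot
  have hdim := Submodule.finrank_sup_add_finrank_inf_eq (Submodule.span K s) (K ∙ v)
  rwa [hdisj, finrank_bot, add_zero, finrank_span_singleton hv₀, sup_comm,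
    ← Submodule.span_insert] at hdim

theorem finrank_quotient_dualCoannihilator {K V : Type*} [Field K] [AddCommGroup V] [Module K V]
    (W : Subspace K (Module.Dual K V)) [FiniteDimensional K W] :
    Module.finrank K (V ⧸ W.dualCoannihilator) = Module.finrank K W :=
  (LinearEquiv.ofBijective (Submodule.quotDualCoannihilatorToDual W)
    (Subspace.quotDualCoannihilatorToDual_bijective W)).finrank_eq.trans
    (Subspace.dual_finrank_eq (K := K) (V := W))

end LinearAlgebra

section WeightedHomogeneous

variable {R σ τ M N : Type*} [CommSemiring R] [AddCommMonoid M] [AddCommMonoid N]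

theorem isWeightedHomogeneous_bind₁ {w : σ → M} {w' : τ → N} (e : M →+ N)
    {φ : σ → MvPolynomial τ R} (hφ : ∀ a, IsWeightedHomogeneous w' (φ a) (e (w a)))
    {F : MvPolynomial σ R} {d : M} (hF : IsWeightedHomogeneous w F d) :
    IsWeightedHomogeneous w' (bind₁ φ F) (e d) := by
  rw [← aeval_eq_bind₁, aeval_def, eval₂_eq]
  refine IsWeightedHomogeneous.sum _ _ _ fun s hs => IsWeightedHomogeneous.C_mul ?_ _
  rw [← hF (mem_support_iff.1 hs), Finsupp.weight_apply, Finsupp.sum, map_sum]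
  refine IsWeightedHomogeneous.prod _ _ _ fun a _ => ?_
  rw [map_nsmul]
  exact (hφ a).pow _

theorem nonneg_of_isWeightedHomogeneous [PartialOrder M] [IsOrderedAddMonoid M] {w : σ → M}
    (hw : ∀ a, 0 ≤ w a) {F : MvPolynomial σ R} {d : M} (hF : IsWeightedHomogeneous w F d)
    (hF₀ : F ≠ 0) : 0 ≤ d := by
  obtain ⟨s, hs⟩ := ne_zero_iff.1 hF₀
  rw [← hF hs, Finsupp.weight_apply]
  exact Finset.sum_nonneg fun a _ => nsmul_nonneg (hw a) _

end WeightedHomogeneous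

section Separators

variable {K σ τ ι κ M N : Type*} [Field K] [AddCommMonoid M] [AddCommMonoid N]
  {w : σ → M} {x : ι → σ → K} {s t u : Finset ι} {i : ι} {d e : M}

/-- The point `x i` has a separator of degree `d` in the configuration `(x j)_{j ∈ s}`. Points are
given as a family, so that the same notion serves `P^N` (the identity family) and `P^m × P^n`. -/
def HasSeparator (w : σ → M) (x : ι → σ → K) (s : Finset ι) (i : ι) (d : M) : Prop :=
  ∃ F : MvPolynomial σ K, IsWeightedHomogeneous w F d ∧ eval (x i) F ≠ 0 ∧
    ∀ j ∈ s, j ≠ i → eval (x j) F = 0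

theorem HasSeparator.mul (hs : HasSeparator w x s i d) (ht : HasSeparator w x t i e)
    (hu : ∀ j ∈ u, j ≠ i → j ∈ s ∨ j ∈ t) : HasSeparator w x u i (d + e) := by
  obtain ⟨F, hF, hFi, hFs⟩ := hs
  obtain ⟨G, hG, hGi, hGt⟩ := ht
  refine ⟨F * G, hF.mul hG, by simpa using ⟨hFi, hGi⟩, fun j hj hji => ?_⟩
  rw [map_mul]
  rcases hu j hj hji with hjs | hjt
  · rw [hFs j hjs hji, zero_mul]
  · rw [hGt j hjt hji, mul_zero]

theorem HasSeparator.add_nsmul (hs : HasSeparator w x s i d) {a : σ} (ha : x i a ≠ 0) (k : ℕ) :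
    HasSeparator w x s i (d + k • w a) := by
  have hX : HasSeparator w x ∅ i (k • w a) :=
    ⟨X a ^ k, (isWeightedHomogeneous_X K w a).pow k, by simpa using pow_ne_zero k ha, by simp⟩
  exact hs.mul hX fun j hj _ => Or.inl hj

theorem HasSeparator.nonneg [PartialOrder M] [IsOrderedAddMonoid M] (hw : ∀ a, 0 ≤ w a)
    (hs : HasSeparator w x s i d) : 0 ≤ d := by
  obtain ⟨F, hF, hFi, -⟩ := hs
  refine nonneg_of_isWeightedHomogeneous hw hF ?_
  rintro rfl
  exact hFi (map_zero _)

theorem HasSeparator.bind₁ {w' : τ → N} {y : κ → τ → K} {v : Finset κ} {k : κ}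
    {φ : σ → MvPolynomial τ K} {f : κ → ι} (e : M →+ N)
    (hφ : ∀ a, IsWeightedHomogeneous w' (φ a) (e (w a)))
    (hφf : ∀ l a, eval (y l) (φ a) = x (f l) a)
    (hv : ∀ l ∈ v, l ≠ k → f l ∈ s ∧ f l ≠ f k) (hs : HasSeparator w x s (f k) d) :
    HasSeparator w' y v k (e d) := by
  obtain ⟨F, hF, hFk, hFs⟩ := hs
  have heval : ∀ l, eval (y l) (MvPolynomial.bind₁ φ F) = eval (x (f l)) F := fun l =>
    (eval₂Hom_bind₁ (RingHom.id K) (y l) φ F).trans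
      (congrArg (fun z => eval z F) (funext (hφf l)))
  refine ⟨MvPolynomial.bind₁ φ F, isWeightedHomogeneous_bind₁ e hφ hF, by rwa [heval],
    fun l hl hlk => ?_⟩
  rw [heval]
  exact hFs _ (hv l hl hlk).1 (hv l hl hlk).2

theorem hasSeparator_of_notMem_span [Finite σ] (hw : ∀ a, w a = e)
    (hi : x i ∉ Submodule.span K (x '' s)) : HasSeparator w x s i e := by
  have := Fintype.ofFinite σ
  classical
  obtain ⟨f, hfi, hfs⟩ := Submodule.exists_le_ker_of_notMem hi
  have heval : ∀ z : σ → K, eval z (∑ a, C (f (Pi.single a 1)) * X a) = f z := fun z => by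
    conv_rhs => rw [pi_eq_sum_univ' z, map_sum]
    simp [mul_comm, Pi.single]
  refine ⟨∑ a, C (f (Pi.single a 1)) * X a, IsWeightedHomogeneous.sum _ _ _ fun a _ => ?_,
    by rwa [heval], fun j hj _ => ?_⟩
  · exact ((hw a) ▸ isWeightedHomogeneous_X K w a).C_mul _
  · rw [heval]
    exact hfs (Submodule.subset_span ⟨j, hj, rfl⟩)

theorem hasSeparator_zero (hi : ∀ j ∈ s, j = i) : HasSeparator w x s i 0 :=
  ⟨1, isWeightedHomogeneous_one K w, by simp, fun j hj hji => absurd (hi j hj) hji⟩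

theorem exists_hasSeparator_of_forall_singleton
    (h : ∀ j ∈ s, j ≠ i → ∃ d, HasSeparator w x {j} i d) : ∃ d, HasSeparator w x s i d := by
  classical
  induction s using Finset.induction_on with
  | empty => exact ⟨0, hasSeparator_zero (by simp)⟩
  | insert j s _ ih =>
    obtain ⟨d, hd⟩ := ih fun k hk => h k (Finset.mem_insert_of_mem hk)
    obtain ⟨e, he⟩ : ∃ e, HasSeparator w x {j} i e := by
      by_cases hji : j = i
      · exact ⟨0, hasSeparator_zero (by simpa using hji)⟩
      · exact h j (Finset.mem_insert_self j s) hji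
    exact ⟨e + d, he.mul hd fun k hk _ => by simpa using hk⟩

end Separators

section HilbertFunction

variable {K σ ι M : Type*} [Field K] [AddCommMonoid M]
  (w : σ → M) (x : ι → σ → K) (s : Finset ι) (d : M)

/-- The ideal generated by the `w`-homogeneous polynomials vanishing at all points `x i`, `i ∈ s`;
it specialises to both `vIdeal1` and `vIdealB`. -/
def homogeneousVanishingIdeal : Ideal (MvPolynomial σ K) :=
  Ideal.span {F | (∃ d, IsWeightedHomogeneous w F d) ∧ ∀ i ∈ s, eval (x i) F = 0}

/-- The Hilbert function of the configuration `(x i)_{i ∈ s}` with respect to the grading `w`;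
it specialises to both `HF1` and `HFB`. -/
def hilbertFunction : ℕ :=
  Module.finrank K ((weightedHomogeneousSubmodule K w d).map
    (Ideal.Quotient.mkₐ K (homogeneousVanishingIdeal w x s)).toLinearMap)

/-- Evaluation at the point `x i`, as a linear functional on the forms of degree `d`: the rank of
these functionals is the Hilbert function, and their linear dependence is governed by separators. -/
def evalDual (i : ι) : Module.Dual K (weightedHomogeneousSubmodule K w d) :=
  (aeval (x i)).toLinearMap.domRestrict _

variable {w x s d}

theorem evalDual_apply (i : ι) (F : weightedHomogeneousSubmodule K w d) :
    evalDual w x d i F = eval (x i) F.1 := by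
  simp [evalDual, aeval_eq_eval]

theorem mem_homogeneousVanishingIdeal_iff {F : MvPolynomial σ K}
    (hF : IsWeightedHomogeneous w F d) :
    F ∈ homogeneousVanishingIdeal w x s ↔ ∀ i ∈ s, eval (x i) F = 0 := by
  refine ⟨fun h i hi => ?_, fun h => Ideal.subset_span ⟨⟨d, hF⟩, h⟩⟩
  have hle : homogeneousVanishingIdeal w x s ≤ RingHom.ker (eval (x i)) :=
    Ideal.span_le.2 fun G hG => hG.2 i hi
  exact hle h

theorem mem_dualCoannihilator_span_evalDual_iff {t : Set ι}
    {F : weightedHomogeneousSubmodule K w d} :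
    F ∈ (Submodule.span K (evalDual w x d '' t)).dualCoannihilator ↔
      ∀ i ∈ t, eval (x i) F.1 = 0 := by
  rw [← SetLike.mem_coe, Submodule.coe_dualCoannihilator_span]
  simp [evalDual_apply]

theorem hilbertFunction_eq_finrank_span_evalDual :
    hilbertFunction w x s d =
      Module.finrank K (Submodule.span K (evalDual w x d '' s)) := by
  have := FiniteDimensional.span_of_finite K (s.finite_toSet.image (evalDual w x d))
  let π := (Ideal.Quotient.mkₐ K (homogeneousVanishingIdeal w x s)).toLinearMap.domRestrict
    (weightedHomogeneousSubmodule K w d)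
  have hker : LinearMap.ker π =
      (Submodule.span K (evalDual w x d '' s)).dualCoannihilator := by
    ext F
    rw [mem_dualCoannihilator_span_evalDual_iff]
    exact Ideal.Quotient.eq_zero_iff_mem.trans (mem_homogeneousVanishingIdeal_iff F.2)
  rw [← finrank_quotient_dualCoannihilator, ← hker, π.quotKerEquivRange.finrank_eq,
    LinearMap.range_domRestrict, hilbertFunction]

theorem hasSeparator_iff_evalDual_notMem_span {i : ι} :
    HasSeparator w x s i d ↔
      evalDual w x d i ∉ Submodule.span K (evalDual w x d '' (s \ {i})) := by
  have := FiniteDimensional.span_of_finite K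
    ((s.finite_toSet.sdiff (t := {i})).image (evalDual w x d))
  have hspan : evalDual w x d i ∈ Submodule.span K (evalDual w x d '' (s \ {i})) ↔
      ∀ F : MvPolynomial σ K, IsWeightedHomogeneous w F d →
        (∀ j ∈ s, j ≠ i → eval (x j) F = 0) → eval (x i) F = 0 := by
    rw [← Subspace.dualCoannihilator_dualAnnihilator_eq (W := Submodule.span K _),
      Submodule.mem_dualAnnihilator]
    simp only [mem_dualCoannihilator_span_evalDual_iff, evalDual_apply, Subtype.forall,
      mem_weightedHomogeneousSubmodule, Set.mem_sdiff, Finset.mem_coe, Set.mem_singleton_iff,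
      and_imp]
  rw [hspan, HasSeparator]
  push Not
  exact exists_congr fun F => and_congr_right fun _ => and_comm

theorem hilbertFunction_eq_card_iff :
    hilbertFunction w x s d = s.card ↔ ∀ i ∈ s, HasSeparator w x s i d := by
  have hindep : (∀ i ∈ s, HasSeparator w x s i d) ↔ LinearIndepOn K (evalDual w x d) s := by
    simp only [hasSeparator_iff_evalDual_notMem_span, linearIndepOn_iff_notMem_span,
      Finset.mem_coe]
  rw [hindep, hilbertFunction_eq_finrank_span_evalDual, LinearIndepOn,
    linearIndependent_iff_card_eq_finrank_span, Set.finrank, ← Set.image_eq_range, eq_comm]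
  simp

open Classical in
theorem hilbertFunction_erase_add_ite [DecidableEq ι] {i : ι} (hi : i ∈ s) :
    hilbertFunction w x (s.erase i) d + (if HasSeparator w x s i d then 1 else 0) =
      hilbertFunction w x s d := by
  have hinsert : evalDual w x d '' s =
      insert (evalDual w x d i) (evalDual w x d '' (s \ {i})) := by
    rw [← Set.image_insert_eq, Set.insert_sdiff_singleton,
      Set.insert_eq_of_mem (Finset.mem_coe.2 hi)]
  rw [hilbertFunction_eq_finrank_span_evalDual, hilbertFunction_eq_finrank_span_evalDual,
    Finset.coe_erase, hinsert]
  split_ifs with hsep <;> rw [hasSeparator_iff_evalDual_notMem_span] at hsep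
  · exact (finrank_span_insert_of_notMem (s.finite_toSet.sdiff.image _) hsep).symm
  · rw [Submodule.span_insert_eq_span (not_not.1 hsep), add_zero]

end HilbertFunction

section ProjectiveSpace

variable {K : Type} [Field K] {N : ℕ} {Y : Finset (Fin (N + 1) → K)} {q : Fin (N + 1) → K}

theorem exists_hasSeparator_of_goodSet (hY : GoodSet K Y) (hq : q ∈ Y) :
    ∃ d, HasSeparator (wt1 N) id Y q d := by
  refine exists_hasSeparator_of_forall_singleton fun q' hq' hne =>
    ⟨1, hasSeparator_of_notMem_span (fun _ => rfl) fun hmem => hne ?_⟩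
  rw [Finset.coe_singleton, Set.image_singleton, Submodule.mem_span_singleton] at hmem
  obtain ⟨c, hc⟩ := hmem
  refine (hY.2 q hq q' hq' ⟨c, ?_, hc.symm⟩).symm
  rintro rfl
  exact hY.1 q hq (hc.symm.trans (zero_smul K _))

theorem hasSeparator_wt1_iff_deg1_le (hY : GoodSet K Y) (hq : q ∈ Y) {d : ℤ} :
    HasSeparator (wt1 N) id Y q d ↔ (deg1 K Y q : ℤ) ≤ d := by
  have hnonneg : ∀ {e : ℤ}, HasSeparator (wt1 N) id Y q e → 0 ≤ e :=
    HasSeparator.nonneg fun _ => zero_le_one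
  have hmin : HasSeparator (wt1 N) id Y q (deg1 K Y q) := by
    obtain ⟨e, he⟩ := exists_hasSeparator_of_goodSet hY hq
    lift e to ℕ using hnonneg he
    exact Nat.sInf_mem (s := {e : ℕ | HasSeparator (wt1 N) id Y q e}) ⟨e, he⟩
  refine ⟨fun h => ?_, fun h => ?_⟩
  · lift d to ℕ using hnonneg h
    exact_mod_cast Nat.sInf_le h
  · obtain ⟨k, rfl⟩ := Int.le.dest h
    obtain ⟨a, ha⟩ := Function.ne_iff.1 (hY.1 q hq)
    simpa [wt1] using hmin.add_nsmul ha k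

theorem regIndex1_eq_sup_deg1 (hY : GoodSet K Y) : regIndex1 K Y = Y.sup (deg1 K Y) := by
  have hcard : ∀ i : ℕ, HF1 K Y i = Y.card ↔ Y.sup (deg1 K Y) ≤ i := fun i => by
    rw [Finset.sup_le_iff]
    exact (hilbertFunction_eq_card_iff (x := id)).trans (forall₂_congr fun q hq =>
      (hasSeparator_wt1_iff_deg1_le hY hq).trans Nat.cast_le)
  have hset : {r : ℕ | ∀ i : ℕ, r ≤ i → HF1 K Y i = Y.card} = Set.Ici (Y.sup (deg1 K Y)) := by
    ext r
    simp only [hcard, Set.mem_ofPred_eq, Set.mem_Ici]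
    exact ⟨fun h => h r le_rfl, fun h _ => h.trans⟩
  rw [regIndex1, hset, csInf_Ici]

theorem forall_deg1_eq_iff_isCB1_and_regIndex1_eq {ι : Type*} {s : Finset ι}
    {Y : ι → Finset (Fin (N + 1) → K)} {q : ι → Fin (N + 1) → K}
    (hY : ∀ i ∈ s, GoodSet K (Y i)) (hq : ∀ i ∈ s, q i ∈ Y i)
    (hfib : ∀ i ∈ s, ∀ x ∈ Y i, ∃ j ∈ s, q j = x ∧ Y j = Y i) :
    (∀ i ∈ s, ∀ j ∈ s, deg1 K (Y i) (q i) = deg1 K (Y j) (q j)) ↔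
      (∀ i ∈ s, IsCB1 K (Y i)) ∧
        ∀ i ∈ s, ∀ j ∈ s, regIndex1 K (Y i) = regIndex1 K (Y j) := by
  refine ⟨fun h => ?_, fun ⟨hCB, hreg⟩ i hi j hj => ?_⟩
  · have hdeg : ∀ i ∈ s, ∀ x ∈ Y i, deg1 K (Y i) x = deg1 K (Y i) (q i) := by
      intro i hi x hx
      obtain ⟨j, hj, rfl, hji⟩ := hfib i hi x hx
      rw [← hji, h j hj i hi, hji]
    have hreg : ∀ i ∈ s, regIndex1 K (Y i) = deg1 K (Y i) (q i) := fun i hi => by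
      rw [regIndex1_eq_sup_deg1 (hY i hi), Finset.sup_congr rfl (hdeg i hi),
        Finset.sup_const ⟨_, hq i hi⟩]
    exact ⟨fun i hi x hx => by rw [hdeg i hi x hx, hreg i hi],
      fun i hi j hj => by rw [hreg i hi, hreg j hj, h i hi j hj]⟩
  · rw [hCB i hi _ (hq i hi), hCB j hj _ (hq j hj), hreg i hi j hj]

end ProjectiveSpace

section Slices

variable {K : Type} [DecidableEq K] {m n : ℕ} {𝕏 : Finset (BiPt K m n)} {p : BiPt K m n}

theorem mem_Vset {x : Fin (m + 1) → K} : x ∈ Vset K 𝕏 p ↔ (x, p.2) ∈ 𝕏 := by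
  simp [Vset]

theorem mem_Wset {y : Fin (n + 1) → K} : y ∈ Wset K 𝕏 p ↔ (p.1, y) ∈ 𝕏 := by
  simp [Wset]

end Slices

section Product

variable {K : Type} [Field K] [DecidableEq K] {m n : ℕ} {𝕏 : Finset (BiPt K m n)} {p : BiPt K m n}

/-- The coordinate vector of a point of `P^m × P^n`, as used by `evalB`. -/
def coords (p : BiPt K m n) : Fin (m + 1) ⊕ Fin (n + 1) → K :=
  Sum.elim p.1 p.2

open Classical in
theorem hasCB_iff_sepDegsB_eq :
    HasCB K 𝕏 ↔ ∀ p ∈ 𝕏, ∀ q ∈ 𝕏, sepDegsB K 𝕏 p = sepDegsB K 𝕏 q := by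
  have herase : ∀ r ∈ 𝕏, ∀ d,
      HFB K (𝕏.erase r) d + (if d ∈ sepDegsB K 𝕏 r then 1 else 0) = HFB K 𝕏 d :=
    fun _ hr _ => hilbertFunction_erase_add_ite (w := biwt m n) (x := coords) hr
  simp only [HasCB, Set.ext_iff]
  refine forall₄_congr fun p hp q hq => forall_congr' fun d => ?_
  have hp' := herase p hp d
  have hq' := herase q hq d
  grind

theorem goodSet_Vset (hgood : GoodConfig K 𝕏) : GoodSet K (Vset K 𝕏 p) :=
  ⟨fun _ hx => (hgood.1 _ (mem_Vset.1 hx)).1,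
    fun _ hx _ hy => hgood.2.1 _ (mem_Vset.1 hx) _ (mem_Vset.1 hy)⟩

theorem goodSet_Wset (hgood : GoodConfig K 𝕏) : GoodSet K (Wset K 𝕏 p) :=
  ⟨fun _ hx => (hgood.1 _ (mem_Wset.1 hx)).2,
    fun _ hx _ hy => hgood.2.2 _ (mem_Wset.1 hx) _ (mem_Wset.1 hy)⟩

theorem hasSeparator_Vset {d : ℤ × ℤ} (hd : HasSeparator (biwt m n) coords 𝕏 p d) :
    HasSeparator (wt1 m) id (Vset K 𝕏 p) p.1 d.1 := by
  refine hd.bind₁ (φ := Sum.elim X (C ∘ p.2)) (f := fun x => (x, p.2)) (AddMonoidHom.fst ℤ ℤ)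
    ?_ ?_ fun x hx hne => ⟨mem_Vset.1 hx, fun h => hne (congrArg Prod.fst h)⟩
  · rintro (a | b)
    · exact isWeightedHomogeneous_X K _ a
    · exact isWeightedHomogeneous_C _ _
  · rintro x (a | b) <;> simp [coords]

theorem hasSeparator_Wset {d : ℤ × ℤ} (hd : HasSeparator (biwt m n) coords 𝕏 p d) :
    HasSeparator (wt1 n) id (Wset K 𝕏 p) p.2 d.2 := by
  refine hd.bind₁ (φ := Sum.elim (C ∘ p.1) X) (f := fun y => (p.1, y)) (AddMonoidHom.snd ℤ ℤ)
    ?_ ?_ fun y hy hne => ⟨mem_Wset.1 hy, fun h => hne (congrArg Prod.snd h)⟩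
  · rintro (a | b)
    · exact isWeightedHomogeneous_C _ _
    · exact isWeightedHomogeneous_X K _ b
  · rintro y (a | b) <;> simp [coords]

theorem hasSeparator_of_Vset_of_Wset (hstar : StarProp K 𝕏) (hp : p ∈ 𝕏) {d : ℤ × ℤ}
    (hV : HasSeparator (wt1 m) id (Vset K 𝕏 p) p.1 d.1)
    (hW : HasSeparator (wt1 n) id (Wset K 𝕏 p) p.2 d.2) :
    HasSeparator (biwt m n) coords 𝕏 p d := by
  have hA : HasSeparator (biwt m n) coords {q ∈ 𝕏 | (q.1, p.2) ∈ 𝕏 ∧ q.1 ≠ p.1} p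
      (AddMonoidHom.inl ℤ ℤ d.1) :=
    hV.bind₁ (φ := X ∘ Sum.inl) (f := Prod.fst) _ (fun a => isWeightedHomogeneous_X K _ _)
      (fun q a => by simp [coords])
      fun q hq _ => by simpa [mem_Vset] using (Finset.mem_filter.1 hq).2
  have hB : HasSeparator (biwt m n) coords {q ∈ 𝕏 | (p.1, q.2) ∈ 𝕏 ∧ q.2 ≠ p.2} p
      (AddMonoidHom.inr ℤ ℤ d.2) :=
    hW.bind₁ (φ := X ∘ Sum.inr) (f := Prod.snd) _ (fun a => isWeightedHomogeneous_X K _ _)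
      (fun q a => by simp [coords])
      fun q hq _ => by simpa [mem_Wset] using (Finset.mem_filter.1 hq).2
  have hcover : ∀ q ∈ 𝕏, q ≠ p → q ∈ ({q ∈ 𝕏 | (q.1, p.2) ∈ 𝕏 ∧ q.1 ≠ p.1} : Finset _) ∨
      q ∈ ({q ∈ 𝕏 | (p.1, q.2) ∈ 𝕏 ∧ q.2 ≠ p.2} : Finset _) := by
    intro q hq hne
    simp only [Finset.mem_filter, hq, true_and]
    by_cases h₁ : q.1 = p.1
    · exact Or.inr ⟨h₁ ▸ hq, fun h₂ => hne (Prod.ext h₁ h₂)⟩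
    by_cases h₂ : q.2 = p.2
    · exact Or.inl ⟨h₂ ▸ hq, h₁⟩
    exact (hstar p hp q hq).symm.imp (⟨·, h₁⟩) (⟨·, h₂⟩)
  simpa using hA.mul hB hcover

theorem sepDegsB_eq_Ici (hgood : GoodConfig K 𝕏) (hstar : StarProp K 𝕏) (hp : p ∈ 𝕏) :
    sepDegsB K 𝕏 p =
      Set.Ici ((deg1 K (Vset K 𝕏 p) p.1 : ℤ), (deg1 K (Wset K 𝕏 p) p.2 : ℤ)) := by
  ext d
  rw [Set.mem_Ici, Prod.le_def,
    ← hasSeparator_wt1_iff_deg1_le (goodSet_Vset hgood) (mem_Vset.2 hp),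
    ← hasSeparator_wt1_iff_deg1_le (goodSet_Wset hgood) (mem_Wset.2 hp)]
  exact ⟨fun hd => ⟨hasSeparator_Vset hd, hasSeparator_Wset hd⟩,
    fun hd => hasSeparator_of_Vset_of_Wset hstar hp hd.1 hd.2⟩

theorem forall_deg1_Vset_eq_iff (hgood : GoodConfig K 𝕏) :
    (∀ p ∈ 𝕏, ∀ q ∈ 𝕏, deg1 K (Vset K 𝕏 p) p.1 = deg1 K (Vset K 𝕏 q) q.1) ↔
      (∀ p ∈ 𝕏, IsCB1 K (Vset K 𝕏 p)) ∧
        ∀ p ∈ 𝕏, ∀ q ∈ 𝕏, regIndex1 K (Vset K 𝕏 p) = regIndex1 K (Vset K 𝕏 q) :=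
  forall_deg1_eq_iff_isCB1_and_regIndex1_eq (fun _ _ => goodSet_Vset hgood)
    (fun _ hp => mem_Vset.2 hp) fun p _ x hx => ⟨(x, p.2), mem_Vset.1 hx, rfl, rfl⟩

theorem forall_deg1_Wset_eq_iff (hgood : GoodConfig K 𝕏) :
    (∀ p ∈ 𝕏, ∀ q ∈ 𝕏, deg1 K (Wset K 𝕏 p) p.2 = deg1 K (Wset K 𝕏 q) q.2) ↔
      (∀ p ∈ 𝕏, IsCB1 K (Wset K 𝕏 p)) ∧
        ∀ p ∈ 𝕏, ∀ q ∈ 𝕏, regIndex1 K (Wset K 𝕏 p) = regIndex1 K (Wset K 𝕏 q) :=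
  forall_deg1_eq_iff_isCB1_and_regIndex1_eq (fun _ _ => goodSet_Wset hgood)
    (fun _ hp => mem_Wset.2 hp) fun p _ y hy => ⟨(p.1, y), mem_Wset.1 hy, rfl, rfl⟩

end Product

end MultiProjPoints

open MultiProjPoints in
theorem statement_17_general (K : Type) [Field K] [DecidableEq K] (m n : ℕ)
    (𝕏 : Finset (BiPt K m n)) (hgood : GoodConfig K 𝕏) (hstar : StarProp K 𝕏) :
    HasCB K 𝕏 ↔
      ((∀ p ∈ 𝕏, IsCB1 K (Vset K 𝕏 p)) ∧
        (∀ p ∈ 𝕏, ∀ q ∈ 𝕏, regIndex1 K (Vset K 𝕏 p) = regIndex1 K (Vset K 𝕏 q)) ∧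
        (∀ p ∈ 𝕏, IsCB1 K (Wset K 𝕏 p)) ∧
        (∀ p ∈ 𝕏, ∀ q ∈ 𝕏, regIndex1 K (Wset K 𝕏 p) = regIndex1 K (Wset K 𝕏 q))) := by
  have hdegs : ∀ p ∈ 𝕏, ∀ q ∈ 𝕏, (sepDegsB K 𝕏 p = sepDegsB K 𝕏 q ↔
      deg1 K (Vset K 𝕏 p) p.1 = deg1 K (Vset K 𝕏 q) q.1 ∧
        deg1 K (Wset K 𝕏 p) p.2 = deg1 K (Wset K 𝕏 q) q.2) := fun p hp q hq => by
    rw [sepDegsB_eq_Ici hgood hstar hp, sepDegsB_eq_Ici hgood hstar hq, Set.Ici_inj,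
      Prod.mk_inj, Nat.cast_inj, Nat.cast_inj]
  rw [hasCB_iff_sepDegsB_eq, forall₄_congr hdegs, ← and_assoc, ← forall_deg1_Vset_eq_iff hgood,
    ← forall_deg1_Wset_eq_iff hgood]
  simp only [forall_and]

open MultiProjPoints in
/-- Theorem 5.2: if `𝕏 ⊆ P^m × P^n` has the
`(⋆)`-property, then `𝕏` has the Cayley-Bacharach property iff all the sets
`V_j` are Cayley-Bacharach schemes in `P^m` with equal regularity indices and
all the sets `W_i` are Cayley-Bacharach schemes in `P^n` with equal
regularity indices. -/
theorem statement_17 (K : Type) [Field K] [CharZero K] [DecidableEq K]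
    (m n : ℕ) (𝕏 : Finset (BiPt K m n)) (hgood : GoodConfig K 𝕏)
    (hne : 𝕏.Nonempty) (hstar : StarProp K 𝕏) :
    HasCB K 𝕏 ↔
      ((∀ p ∈ 𝕏, IsCB1 K (Vset K 𝕏 p)) ∧
        (∀ p ∈ 𝕏, ∀ q ∈ 𝕏, regIndex1 K (Vset K 𝕏 p) = regIndex1 K (Vset K 𝕏 q)) ∧
        (∀ p ∈ 𝕏, IsCB1 K (Wset K 𝕏 p)) ∧
        (∀ p ∈ 𝕏, ∀ q ∈ 𝕏, regIndex1 K (Wset K 𝕏 p) = regIndex1 K (Wset K 𝕏 q))) :=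
  statement_17_general K m n 𝕏 hgood hstar
end
end
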